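/- (Gauge equivariance of the Equivariant Mesh Attention update with self-contribution.) Let C_in, C_att, C_out be positive integers and let ρ_in, ρ_att, ρ_out be orthogonal representations of SO(2) on ℝ^{C_in}, ℝ^{C_att}, ℝ^{C_out}. Let K_query, K_key^self be C_att × C_in real matrices, K_value^self a C_out × C_in real matrix, and K_key^neigh : ℝ → M_{C_att × C_in}(ℝ), K_value^neigh : ℝ → M_{C_out × C_in}(ℝ), satisfying for all θ, g ∈ ℝ: K_query = ρ_att(−g) K_query ρ_in(g), K_key^self = ρ_att(−g) K_key^self ρ_in(g), K_value^self = ρ_out(−g) K_value^self ρ_in(g), K_key^neigh(θ − g) = ρ_att(−g) K_key^neigh(θ) ρ_in(g), and K_value^neigh(θ − g) = ρ_out(−g) K_value^neigh(θ) ρ_in(g). For an integer N ≥ 1, data (θ_q, g_q, f_q) ∈ ℝ × ℝ × ℝ^{C_in} for q = 1, …, N and f_p ∈ ℝ^{C_in}, set Q := K_query f_p, K_0 := K_key^self f_p, V_0 := K_value^self f_p, K_q := K_key^neigh(θ_q) ρ_in(g_q) f_q, V_q := K_value^neigh(θ_q) ρ_in(g_q) f_q, and define F̃(f_p; (θ_q,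 g_q, f_q)_q) := (N + 1) · Σ_{j = 0}^{N} α_j V_j, where (α_j)_{j = 0, …, N} := softmax over j of ⟨K_j, Q⟩ / √C_att. Then for all gauge changes h_p ∈ ℝ at p and h_q ∈ ℝ at each neighbor q: F̃( ρ_in(−h_p) f_p; (θ_q − h_p, g_q + h_q − h_p, ρ_in(−h_q) f_q)_q ) = ρ_out(−h_p) · F̃( f_p; (θ_q, g_q, f_q)_q ). -/

import Mathlib

/-!
A gauge change at `p` by `h_p` acts on the query and on every key by the same orthogonal matrix
`ρ_att(-h_p)`, so the attention logits `⟨K_j, Q⟩ / √C_att`, and hence the softmax weights, are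
invariant; every value is multiplied by `ρ_out(-h_p)`, which then factors out of the weighted sum
by linearity. The kernel constraints give this transformation law in `mulVec_self_gauge` (query,
self key, self value) and `mulVec_neigh_gauge` (neighbor keys and values, where the changes `h_q`
cancel against the transporter); orthogonality is used in `OrthRep.dotProduct_mulVec_mulVec`.
-/

noncomputable section
open scoped BigOperators
open Matrix

/-- An orthogonal representation of `SO(2)` on `ℝ^C`, given by a map
`ρ : ℝ → M_C(ℝ)` with `ρ(0) = I`, `ρ(a+b) = ρ(a)ρ(b)`, `ρ(g + 2π) = ρ(g)` and
`ρ(g)ᵀ = ρ(−g)`. -/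
structure OrthRep (C : ℕ) where
  ρ : ℝ → Matrix (Fin C) (Fin C) ℝ
  map_zero : ρ 0 = 1
  map_add : ∀ a b : ℝ, ρ (a + b) = ρ a * ρ b
  periodic : ∀ g : ℝ, ρ (g + 2 * Real.pi) = ρ g
  transpose_eq : ∀ g : ℝ, (ρ g)ᵀ = ρ (-g)

/-- Softmax of a finite family of reals. -/
def softmax {N : ℕ} (z : Fin N → ℝ) (q : Fin N) : ℝ :=
  Real.exp (z q) / ∑ q', Real.exp (z q')

/-- The Equivariant Mesh Attention convolutional update with self-contribution:
`F̃(f_p; (θ_q, g_q, f_q)_q) = (N+1) · Σ_{j=0}^{N} α_j V_j`, where `V_0, K_0` are the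
self key/value, `V_q, K_q` the neighbor keys/values, and
`α = softmax_j ⟨K_j, Q⟩ / √C_att` with `Q = K_query f_p`. -/
def attnUpdateSelf {Cin Catt Cout N : ℕ}
    (ρin : ℝ → Matrix (Fin Cin) (Fin Cin) ℝ)
    (Kquery KkeySelf : Matrix (Fin Catt) (Fin Cin) ℝ)
    (KvalueSelf : Matrix (Fin Cout) (Fin Cin) ℝ)
    (KkeyNeigh : ℝ → Matrix (Fin Catt) (Fin Cin) ℝ)
    (KvalueNeigh : ℝ → Matrix (Fin Cout) (Fin Cin) ℝ)
    (fp : Fin Cin → ℝ) (θ g : Fin N → ℝ) (f : Fin N → Fin Cin → ℝ) :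
    Fin Cout → ℝ :=
  let Q : Fin Catt → ℝ := Kquery.mulVec fp
  let K : Fin (N + 1) → Fin Catt → ℝ :=
    Fin.cons (KkeySelf.mulVec fp)
      (fun q => (KkeyNeigh (θ q)).mulVec ((ρin (g q)).mulVec (f q)))
  let V : Fin (N + 1) → Fin Cout → ℝ :=
    Fin.cons (KvalueSelf.mulVec fp)
      (fun q => (KvalueNeigh (θ q)).mulVec ((ρin (g q)).mulVec (f q)))
  ((N : ℝ) + 1) • ∑ j, softmax (fun j' => (K j' ⬝ᵥ Q) / Real.sqrt Catt) j • V j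

theorem OrthRep.dotProduct_mulVec_mulVec {C : ℕ} (R : OrthRep C) (a : ℝ) (v w : Fin C → ℝ) :
    R.ρ a *ᵥ v ⬝ᵥ R.ρ a *ᵥ w = v ⬝ᵥ w := by
  rw [dotProduct_mulVec, ← mulVec_transpose, mulVec_mulVec, R.transpose_eq, ← R.map_add,
    neg_add_cancel, R.map_zero, one_mulVec]

theorem mulVec_self_gauge {C D : ℕ} (R : OrthRep C) (S : OrthRep D)
    (K : Matrix (Fin D) (Fin C) ℝ) (hK : ∀ g : ℝ, K = S.ρ (-g) * K * R.ρ g)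
    (h : ℝ) (v : Fin C → ℝ) :
    K *ᵥ (R.ρ (-h) *ᵥ v) = S.ρ (-h) *ᵥ (K *ᵥ v) := by
  conv_lhs => rw [hK h]
  rw [mulVec_mulVec, mulVec_mulVec, Matrix.mul_assoc, ← R.map_add, add_neg_cancel, R.map_zero,
    Matrix.mul_one]

theorem mulVec_neigh_gauge {C D : ℕ} (R : OrthRep C) (S : OrthRep D)
    (K : ℝ → Matrix (Fin D) (Fin C) ℝ)
    (hK : ∀ θ g : ℝ, K (θ - g) = S.ρ (-g) * K θ * R.ρ g)
    (θ g h k : ℝ) (v : Fin C → ℝ) :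
    K (θ - h) *ᵥ (R.ρ (g + k - h) *ᵥ (R.ρ (-k) *ᵥ v)) =
      S.ρ (-h) *ᵥ (K θ *ᵥ (R.ρ g *ᵥ v)) := by
  have hg : R.ρ h * (R.ρ (g + k - h) * R.ρ (-k)) = R.ρ g := by
    rw [← R.map_add, ← R.map_add]
    congr 1
    ring
  rw [hK]
  simp only [mulVec_mulVec, Matrix.mul_assoc, hg]

theorem cons_mulVec {D N : ℕ} (A : Matrix (Fin D) (Fin D) ℝ) (x : Fin D → ℝ)
    (y : Fin N → Fin D → ℝ) (j : Fin (N + 1)) :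
    (Fin.cons (A *ᵥ x) (fun q => A *ᵥ y q) : Fin (N + 1) → Fin D → ℝ) j =
      A *ᵥ (Fin.cons x y : Fin (N + 1) → Fin D → ℝ) j := by
  refine Fin.cases ?_ (fun q => ?_) j <;> simp

/-- gauge equivariance of the Equivariant Mesh Attention update
with self-contribution. -/
theorem attnUpdateSelf_gauge_equivariant
    {Cin Catt Cout : ℕ} (hCin : 0 < Cin) (hCatt : 0 < Catt) (hCout : 0 < Cout)
    (ρin : OrthRep Cin) (ρatt : OrthRep Catt) (ρout : OrthRep Cout)
    (Kquery KkeySelf : Matrix (Fin Catt) (Fin Cin) ℝ)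
    (KvalueSelf : Matrix (Fin Cout) (Fin Cin) ℝ)
    (KkeyNeigh : ℝ → Matrix (Fin Catt) (Fin Cin) ℝ)
    (KvalueNeigh : ℝ → Matrix (Fin Cout) (Fin Cin) ℝ)
    (hKquery : ∀ g : ℝ, Kquery = ρatt.ρ (-g) * Kquery * ρin.ρ g)
    (hKkeySelf : ∀ g : ℝ, KkeySelf = ρatt.ρ (-g) * KkeySelf * ρin.ρ g)
    (hKvalueSelf : ∀ g : ℝ, KvalueSelf = ρout.ρ (-g) * KvalueSelf * ρin.ρ g)
    (hKkeyNeigh : ∀ θ g : ℝ, KkeyNeigh (θ - g) = ρatt.ρ (-g) * KkeyNeigh θ * ρin.ρ g)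
    (hKvalueNeigh : ∀ θ g : ℝ, KvalueNeigh (θ - g) = ρout.ρ (-g) * KvalueNeigh θ * ρin.ρ g)
    {N : ℕ} (hN : 1 ≤ N)
    (θ g : Fin N → ℝ) (f : Fin N → Fin Cin → ℝ) (fp : Fin Cin → ℝ)
    (hp : ℝ) (hq : Fin N → ℝ) :
    attnUpdateSelf ρin.ρ Kquery KkeySelf KvalueSelf KkeyNeigh KvalueNeigh
        ((ρin.ρ (-hp)).mulVec fp)
        (fun q => θ q - hp)
        (fun q => g q + hq q - hp)
        (fun q => (ρin.ρ (-(hq q))).mulVec (f q)) =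
      (ρout.ρ (-hp)).mulVec
        (attnUpdateSelf ρin.ρ Kquery KkeySelf KvalueSelf KkeyNeigh KvalueNeigh
          fp θ g f) := by
  simp only [attnUpdateSelf, mulVec_self_gauge ρin ρatt Kquery hKquery,
    mulVec_self_gauge ρin ρatt KkeySelf hKkeySelf,
    mulVec_self_gauge ρin ρout KvalueSelf hKvalueSelf,
    mulVec_neigh_gauge ρin ρatt KkeyNeigh hKkeyNeigh,
    mulVec_neigh_gauge ρin ρout KvalueNeigh hKvalueNeigh,
    cons_mulVec, OrthRep.dotProduct_mulVec_mulVec]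
  simp only [mulVec_smul, mulVec_sum]
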